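/- For $p\in\mathbb{R}[x_1,\dots,x_n]$ let $\mathrm{Support}(p)\subseteq\mathbb{N}^n\subseteq\mathbb{R}^n$ be the set of exponent vectors of the monomials appearing in $p$ with nonzero coefficient, and let the Newton polytope $\mathrm{New}(p)$ be the convex hull of $\mathrm{Support}(p)$ in $\mathbb{R}^n$. A face of a polytope $N\subseteq\mathbb{R}^n$ is a nonempty proper subset $F\subsetneq N$ for which there is an affine function $\pi:\mathbb{R}^n\to\mathbb{R}$ with $\pi=0$ on $F$ and $\pi>0$ on $N\setminus F$ (so $N$ itself is not counted as a face). Call $p$ a convex cover polynomial if there exist finitely many pairwise disjoint faces $F_1,\dots,F_u$ of $\mathrm{New}(p)$ with $\mathrm{Support}(p)\subseteq F_1\cup\dots\cup F_u$. Let $p=x_1^4x_2^2x_3^2+x_1^2x_2^4x_3^2-2x_1^2x_2^2x_3^2+x_3^2+x_1^2x_2^2+x_1^2x_2^2x_3^4\in\mathbb{R}[x_1,x_2,x_3]$. Then $p$ is not a convex cover polynomial; indeed, its support point $(2,2,2)$ lies in the interior (in $\mathbb{R}^3$) of its Newton polytope $\mathrm{New}(p)$. -/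

import Mathlib

open MvPolynomial

noncomputable section

/-- Embed an exponent vector `a ∈ ℕⁿ` into `ℝⁿ`. -/
def toR {n : ℕ} (a : Fin n →₀ ℕ) : Fin n → ℝ := fun i => (a i : ℝ)

/-- The Newton polytope of `p`: convex hull of its support in `ℝⁿ`. -/
def newton {n : ℕ} (p : MvPolynomial (Fin n) ℝ) : Set (Fin n → ℝ) :=
  convexHull ℝ (toR '' (p.support : Set (Fin n →₀ ℕ)))

/-- `F` is a face of the polytope `N`. The faces of a `d`-dimensional polytope have
dimensions from `0` to `d - 1`: they are nonempty, and `N` itself is not counted as a face.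
A face is cut out by an affine function that vanishes on `F` and is positive on `N \ F`. -/
def IsFace {n : ℕ} (N F : Set (Fin n → ℝ)) : Prop :=
  F ⊆ N ∧ F.Nonempty ∧ F ≠ N ∧
    ∃ π : (Fin n → ℝ) →ᵃ[ℝ] ℝ, (∀ x ∈ F, π x = 0) ∧ ∀ x ∈ N \ F, 0 < π x

/-- `p` is a convex cover polynomial: some finitely many pairwise disjoint faces of `New(p)`
cover `Support(p)`. -/
def IsConvexCover {n : ℕ} (p : MvPolynomial (Fin n) ℝ) : Prop :=
  ∃ (u : ℕ) (F : Fin u → Set (Fin n → ℝ)),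
    (∀ i, IsFace (newton p) (F i)) ∧
    (∀ i j, i ≠ j → Disjoint (F i) (F j)) ∧
    toR '' (p.support : Set (Fin n →₀ ℕ)) ⊆ ⋃ i, F i

end

/-!
An affine function that is nonnegative on `N` and vanishes at an interior point of `N` is constant,
so a (proper) face of `N` contains no interior point. The point `(2, 2, 2)` is the average of the
six support points of `p`, and these affinely span `ℝ³` since they include `(2, 2, 2) + 2 eᵢ` for
each `i`. An average with positive weights of points spanning the space is interior to their convex
hull, so the support point `(2, 2, 2)` lies on no face of the Newton polytope.
-/

open Set

/- A supporting functional at a non-interior point `∑ i, w i • v i` would be maximal there over the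
hull; as the weights are positive, it would take this maximal value at every `v i`. -/
theorem sum_smul_mem_interior_convexHull {ι E : Type*} [Fintype ι] [NormedAddCommGroup E]
    [NormedSpace ℝ E] [FiniteDimensional ℝ E] {v : ι → E} (hv : affineSpan ℝ (range v) = ⊤)
    {w : ι → ℝ} (hw : ∀ i, 0 < w i) (hw₁ : ∑ i, w i = 1) :
    ∑ i, w i • v i ∈ interior (convexHull ℝ (range v)) := by
  set x := ∑ i, w i • v i with hx
  by_contra hxint
  obtain ⟨f, hf₀, hf⟩ := geometric_hahn_banach_of_nonempty_interior_point (convex_convexHull ℝ _)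
    hxint (interior_convexHull_nonempty_iff_affineSpan_eq_top.mpr hv)
  have hle : ∀ i, f (v i) ≤ f x := fun i ↦ hf _ (subset_convexHull ℝ _ (mem_range_self i))
  have hsum : ∑ i, w i * f (v i) = ∑ i, w i * f x := by
    simp [← Finset.sum_mul, hw₁, hx]
  have heq : ∀ i, f (v i) = f x := fun i ↦
    mul_left_cancel₀ (hw i).ne' <| (Finset.sum_eq_sum_iff_of_le fun j _ ↦
      mul_le_mul_of_nonneg_left (hle j) (hw j).le).mp hsum i (Finset.mem_univ i)
  have hker : vectorSpan ℝ (range v) ≤ f.ker := by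
    rw [vectorSpan_def, Submodule.span_le]
    rintro _ ⟨_, ⟨i, rfl⟩, _, ⟨j, rfl⟩, rfl⟩
    simp [heq]
  rw [AffineSubspace.vectorSpan_eq_top_of_affineSpan_eq_top ℝ E E hv, top_le_iff] at hker
  exact hf₀ (ContinuousLinearMap.ext fun y ↦ hker.ge Submodule.mem_top)

theorem affineMap_apply_eq_of_isMinOn_of_mem_interior {E : Type*} [AddCommGroup E]
    [Module ℝ E] [TopologicalSpace E] [IsTopologicalAddGroup E] [ContinuousSMul ℝ E] {s : Set E}
    {x : E} {f : E →ᵃ[ℝ] ℝ} (hf : IsMinOn f s x) (hx : x ∈ interior s) (y : E) : f y = f x := by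
  have hmin : ∀ z, f x ≤ f z :=
    IsMinOn.of_isLocalMin_of_convex_univ (hf.isLocalMin (mem_interior_iff_mem_nhds.mp hx))
      ((convexOn_id convex_univ).comp_affineMap f)
  have hreflect : f (AffineMap.lineMap x y (-1 : ℝ)) = f x - (f y - f x) := by
    rw [f.apply_lineMap, AffineMap.lineMap_apply_ring]
    ring
  linarith [hmin y, hmin (AffineMap.lineMap x y (-1 : ℝ))]

theorem affineSpan_eq_top_of_forall_add_single_mem {ι k : Type*} [Finite ι] [DecidableEq ι]
    [DivisionRing k] {s : Set (ι → k)} {x : ι → k} (hx : x ∈ s) {c : ι → k} (hc : ∀ i, c i ≠ 0)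
    (h : ∀ i, x + Pi.single i (c i) ∈ s) : affineSpan k s = ⊤ := by
  rw [AffineSubspace.affineSpan_eq_top_iff_vectorSpan_eq_top_of_nonempty k _ _ ⟨x, hx⟩, eq_top_iff,
    ← (Pi.basisFun k ι).span_eq, Submodule.span_le]
  rintro _ ⟨i, rfl⟩
  have hdiff : Pi.single i (c i) ∈ vectorSpan k s := by
    simpa using vsub_mem_vectorSpan k (h i) hx
  simpa [← Pi.single_smul, hc i] using (vectorSpan k s).smul_mem (c i)⁻¹ hdiff

theorem monomial_equivFunOnFinite_symm {σ R : Type*} [Fintype σ] [CommSemiring R] (a : σ → ℕ)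
    (r : R) : monomial (Finsupp.equivFunOnFinite.symm a) r = C r * ∏ i, X i ^ a i := by
  rw [monomial_eq, Finsupp.prod_fintype _ _ fun _ ↦ pow_zero _]
  rfl

theorem coe_support_sum_monomial {ι σ R : Type*} [Fintype ι] [CommSemiring R] {a : ι → σ →₀ ℕ}
    (ha : Function.Injective a) {c : ι → R} (hc : ∀ i, c i ≠ 0) :
    ((∑ i, monomial (a i) (c i)).support : Set (σ →₀ ℕ)) = range a := by
  classical
  ext m
  simp only [Finset.mem_coe, mem_support_iff, coeff_sum, coeff_monomial, mem_range]
  by_cases hm : ∃ i, a i = m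
  · obtain ⟨i, rfl⟩ := hm
    simp [ha.eq_iff, hc]
  · simp [not_exists.mp hm]

theorem IsFace.disjoint_interior {n : ℕ} {N F : Set (Fin n → ℝ)} (hF : IsFace N F) :
    Disjoint F (interior N) := by
  obtain ⟨hFN, -, hne, π, hzero, hpos⟩ := hF
  refine Set.disjoint_left.mpr fun x hxF hx ↦ ?_
  obtain ⟨y, hyN, hyF⟩ : ∃ y ∈ N, y ∉ F := not_subset.mp fun hNF ↦ hne (hFN.antisymm hNF)
  have hmin : IsMinOn π N x := fun z hz ↦ by
    by_cases hzF : z ∈ F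
    · exact ((hzero x hxF).trans (hzero z hzF).symm).le
    · exact (hzero x hxF).trans_le (hpos z ⟨hz, hzF⟩).le
  have hconst : π y = π x := affineMap_apply_eq_of_isMinOn_of_mem_interior hmin hx y
  exact (hpos y ⟨hyN, hyF⟩).ne' (hconst.trans (hzero x hxF))

theorem not_isConvexCover_of_mem_interior {n : ℕ} {p : MvPolynomial (Fin n) ℝ}
    {a : Fin n →₀ ℕ} (ha : a ∈ p.support) (hint : toR a ∈ interior (newton p)) :
    ¬ IsConvexCover p := by
  rintro ⟨u, F, hface, -, hcover⟩
  obtain ⟨i, hi⟩ := mem_iUnion.mp (hcover (mem_image_of_mem toR ha))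
  exact (hface i).disjoint_interior.notMem_of_mem_left hi hint

/-- The exponent vectors of the six monomials of the example, starting with the interior one. -/
noncomputable def exampleExponents (j : Fin 6) : Fin 3 →₀ ℕ :=
  Finsupp.equivFunOnFinite.symm
    (![![2, 2, 2], ![4, 2, 2], ![2, 4, 2], ![2, 2, 4], ![2, 2, 0], ![0, 0, 2]] j)

/-- The coefficients of the monomials of the example, in the order of `exampleExponents`. -/
def exampleCoefficients : Fin 6 → ℝ := ![-2, 1, 1, 1, 1, 1]

theorem exampleExponents_injective : Function.Injective exampleExponents :=
  Finsupp.equivFunOnFinite.symm.injective.comp (by decide)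

theorem exampleCoefficients_ne_zero (j : Fin 6) : exampleCoefficients j ≠ 0 := by
  fin_cases j <;> norm_num [exampleCoefficients]

theorem affineSpan_range_exampleExponents : affineSpan ℝ (range (toR ∘ exampleExponents)) = ⊤ := by
  have hrow : ∀ i k, exampleExponents (![1, 2, 3] i) k =
      exampleExponents 0 k + (Pi.single i 2 : Fin 3 → ℕ) k := by decide
  refine affineSpan_eq_top_of_forall_add_single_mem (mem_range_self 0) (c := 2) (by simp) fun i ↦
    ⟨![1, 2, 3] i, ?_⟩
  ext k
  simp [toR, hrow, Pi.single_apply]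

theorem sum_inv_six_smul_toR_exampleExponents :
    ∑ j, (6⁻¹ : ℝ) • toR (exampleExponents j) = toR (exampleExponents 0) := by
  have hcol : ∀ i, ∑ j, exampleExponents j i = 6 * exampleExponents 0 i := by decide
  ext i
  simp [toR, ← Finset.mul_sum, ← Nat.cast_sum, hcol]

theorem toR_exampleExponents_zero_mem_interior :
    toR (exampleExponents 0) ∈ interior (convexHull ℝ (range (toR ∘ exampleExponents))) := by
  rw [← sum_inv_six_smul_toR_exampleExponents]
  exact sum_smul_mem_interior_convexHull affineSpan_range_exampleExponents
    (fun _ ↦ by norm_num) (by norm_num)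

/-- The polynomial
`p = x₁⁴x₂²x₃² + x₁²x₂⁴x₃² − 2x₁²x₂²x₃² + x₃² + x₁²x₂² + x₁²x₂²x₃⁴`
is not a convex cover polynomial; its support point `(2,2,2)` lies in the interior of
its Newton polytope. -/
theorem statement18 :
    let p : MvPolynomial (Fin 3) ℝ :=
      (X 0) ^ 4 * (X 1) ^ 2 * (X 2) ^ 2 + (X 0) ^ 2 * (X 1) ^ 4 * (X 2) ^ 2
        - 2 * (X 0) ^ 2 * (X 1) ^ 2 * (X 2) ^ 2 + (X 2) ^ 2 + (X 0) ^ 2 * (X 1) ^ 2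
        + (X 0) ^ 2 * (X 1) ^ 2 * (X 2) ^ 4
    let e : Fin 3 →₀ ℕ := Finsupp.single 0 2 + Finsupp.single 1 2 + Finsupp.single 2 2
    e ∈ p.support ∧
    toR e ∈ interior (newton p) ∧
    ¬ IsConvexCover p := by
  intro p e
  have hC : (C 2 : MvPolynomial (Fin 3) ℝ) = 2 := map_ofNat C 2
  have hp : p = ∑ j, monomial (exampleExponents j) (exampleCoefficients j) := by
    simp only [p, exampleExponents, exampleCoefficients, monomial_equivFunOnFinite_symm,
      Fin.sum_univ_six, Fin.prod_univ_three, Matrix.cons_val, map_neg, map_one, hC]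
    ring
  have he : e = exampleExponents 0 := by
    ext i
    fin_cases i <;> simp [e, exampleExponents]
  have hsupp : (p.support : Set (Fin 3 →₀ ℕ)) = range exampleExponents :=
    hp ▸ coe_support_sum_monomial exampleExponents_injective exampleCoefficients_ne_zero
  have hmem : e ∈ p.support := by
    rw [← Finset.mem_coe, hsupp, he]
    exact mem_range_self 0
  have hint : toR e ∈ interior (newton p) := by
    rw [newton, hsupp, ← range_comp, he]
    exact toR_exampleExponents_zero_mem_interior
  exact ⟨hmem, hint, not_isConvexCover_of_mem_interior hmem hint⟩
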